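/- Summed bound on the deviation of Ψ_i^K from A^{-1} (second bound of Lemma 4). Let α, b > 0, β ∈ (0,1), and α_j := α(j+b)^{−β}. Let c ∈ (0,1] and let A be an invertible n×n real matrix such that ‖I − α_j A‖∞ ≤ 1 − cα_j for all j ≥ 0 and ‖A^{-1}‖∞ ≤ 1/c. Then there exists a constant C > 0 depending only on α, b, and β such that for every integer K ≥ 1: ∑_{i=1}^{K} ‖Ψ_i^K − A^{-1}‖∞ ≤ C·( (1 + log K)·c^{−(2−β)/(1−β)} + K^β/c² ). -/

import Mathlib

open Finset

/-- ℓ∞→ℓ∞ operator norm of a matrix: maximum absolute row sum. -/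
noncomputable def normInf {n : Type*} [Fintype n] [Nonempty n] (M : Matrix n n ℝ) : ℝ :=
  Finset.univ.sup' Finset.univ_nonempty (fun i => ∑ j, |M i j|)

/-- The matrix product ∏_{j=a}^{b-1} (I - α_j A), taken over the index range [a, b)
(empty products equal the identity; all factors commute, so the order is immaterial). -/
noncomputable def prodIco {n : Type*} [Fintype n] [DecidableEq n]
    (A : Matrix n n ℝ) (α : ℕ → ℝ) (a b : ℕ) : Matrix n n ℝ :=
  ((List.range' a (b - a)).map (fun j => (1 : Matrix n n ℝ) - α j • A)).prod

/-- Ψ_i^K := α_i ∑_{k=i+1}^{K} ∏_{j=i+1}^{k-1} (I - α_j A). -/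
noncomputable def Psi {n : Type*} [Fintype n] [DecidableEq n]
    (A : Matrix n n ℝ) (α : ℕ → ℝ) (i K : ℕ) : Matrix n n ℝ :=
  α i • ∑ k ∈ Finset.Icc (i + 1) K, prodIco A α (i + 1) k

/-!
Multiplying the telescoping identity `∑ α_k (∏_{j<k} (I - α_j A)) A = I - ∏_{j≤K} (I - α_j A)` by
`A⁻¹` expresses `Ψ_i^K - A⁻¹` through the gaps `α_i - α_k` and one boundary product. Summing the
norms over `i` leaves the scalar sequences `S (k + 1) = (1 - c α_k) S k + 1` and
`T (k + 1) = (1 - c α_k) T k + (α_k - α_{k+1}) S (k + 1)`, and the sum in question is at most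
`∑_{k≤K} T k + S (K + 1) / c`.

Comparison with explicit supersolutions gives `S (k + 1) ≤ α_k⁻¹ / c` and `T k ≤ c⁻¹`. With the
potential `α_k⁻¹ T k` the recursion for `T` yields
`c ∑ T k ≤ ∑ (α_{k+1}⁻¹ - α_k⁻¹) T (k + 1) + (α_K⁻¹ - α_0⁻¹) / c`. Where the increment of `α_k⁻¹` is
at most `c / 2`, its term is absorbed on the left; the increments before that point, up to
`k` of order `c^{-1/(1-β)}`, are paid for by `T ≤ c⁻¹` and telescope to a multiple of
`c^{-β/(1-β)} / c`. Dividing by `c` produces the exponent `2 + β/(1-β) = (2-β)/(1-β)`, without a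
logarithm.
-/

section MatrixNorm

attribute [local instance] Matrix.linftyOpNormedAddCommGroup Matrix.linftyOpNormedRing
  Matrix.linftyOpNormedAlgebra

variable {n : Type*} [Fintype n]

lemma normInf_eq_norm [Nonempty n] (M : Matrix n n ℝ) : normInf M = ‖M‖ := by
  rw [Matrix.linfty_opNorm_def, ← sup'_eq_sup univ_nonempty,
    apply_sup'_eq_sup'_comp univ_nonempty ((↑) : NNReal → ℝ) NNReal.coe_max]
  simp [normInf, Function.comp_def]

lemma normInf_nonneg [Nonempty n] (M : Matrix n n ℝ) : 0 ≤ normInf M :=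
  normInf_eq_norm M ▸ norm_nonneg M

variable [DecidableEq n] {A : Matrix n n ℝ} {a r : ℕ → ℝ}

@[simp]
lemma prodIco_self (A : Matrix n n ℝ) (a : ℕ → ℝ) (i : ℕ) : prodIco A a i i = 1 := by
  simp [prodIco]

lemma prodIco_succ_right (A : Matrix n n ℝ) (a : ℕ → ℝ) {i k : ℕ} (hik : i ≤ k) :
    prodIco A a i (k + 1) = prodIco A a i k * (1 - a k • A) := by
  simp [prodIco, Nat.succ_sub hik, List.range'_concat, Nat.add_sub_cancel' hik]

lemma sum_smul_prodIco_mul (A : Matrix n n ℝ) (a : ℕ → ℝ) {i K : ℕ} (hiK : i ≤ K) :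
    (∑ k ∈ Ico i K, a k • prodIco A a i k) * A = 1 - prodIco A a i K := by
  induction K, hiK using Nat.le_induction with
  | base => simp
  | succ K hK ih =>
    rw [sum_Ico_succ_top hK, add_mul, ih, prodIco_succ_right A a hK, mul_sub, mul_one,
      smul_mul_assoc, mul_smul_comm]
    abel

lemma Psi_sub_inv_eq (hA : IsUnit A) (a : ℕ → ℝ) {i K : ℕ} (hiK : i ≤ K) :
    Psi A a i K - A⁻¹ = ∑ k ∈ Ico (i + 1) (K + 1), (a i - a k) • prodIco A a (i + 1) k
      - prodIco A a (i + 1) (K + 1) * A⁻¹ := by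
  have hdet : IsUnit A.det := (Matrix.isUnit_iff_isUnit_det A).1 hA
  have htelescope : ∑ k ∈ Ico (i + 1) (K + 1), a k • prodIco A a (i + 1) k
      = A⁻¹ - prodIco A a (i + 1) (K + 1) * A⁻¹ := by
    rw [← Matrix.mul_nonsing_inv_cancel_right A (∑ k ∈ Ico (i + 1) (K + 1), _) hdet,
      sum_smul_prodIco_mul A a (Nat.succ_le_succ hiK), sub_mul, one_mul]
  simp only [sub_smul, sum_sub_distrib]
  rw [htelescope, Psi, smul_sum, Ico_add_one_right_eq_Icc]
  abel

variable [Nonempty n]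

lemma norm_prodIco_le (hr : ∀ j, ‖1 - a j • A‖ ≤ r j) {i k : ℕ} (hik : i ≤ k) :
    ‖prodIco A a i k‖ ≤ ∏ j ∈ Ico i k, r j := by
  induction k, hik using Nat.le_induction with
  | base => simp
  | succ k hk ih =>
    rw [prodIco_succ_right A a hk, prod_Ico_succ_top hk]
    exact norm_mul_le_of_le ih (hr k)

lemma normInf_Psi_sub_inv_le (hA : IsUnit A) (ha : Antitone a)
    (hr : ∀ j, normInf (1 - a j • A) ≤ r j) {i K : ℕ} (hiK : i ≤ K) :
    normInf (Psi A a i K - A⁻¹) ≤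
      ∑ k ∈ Ico (i + 1) (K + 1), (a i - a k) * ∏ j ∈ Ico (i + 1) k, r j
        + (∏ j ∈ Ico (i + 1) (K + 1), r j) * normInf A⁻¹ := by
  simp only [normInf_eq_norm] at hr ⊢
  rw [Psi_sub_inv_eq hA a hiK]
  refine norm_sub_le_of_le (norm_sum_le_of_le _ fun k hk => ?_)
    (norm_mul_le_of_le (norm_prodIco_le hr (Nat.succ_le_succ hiK)) le_rfl)
  have hik : i + 1 ≤ k := (mem_Ico.1 hk).1
  have hgap : 0 ≤ a i - a k := sub_nonneg.2 (ha (Nat.le_of_succ_le hik))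
  rw [norm_smul, Real.norm_of_nonneg hgap]
  exact mul_le_mul_of_nonneg_left (norm_prodIco_le hr hik) hgap

lemma isUnit_of_normInf_one_sub_smul_lt_one {t : ℝ} (ht : t ≠ 0)
    (hA : normInf (1 - t • A) < 1) : IsUnit A := by
  rw [normInf_eq_norm] at hA
  have htA : IsUnit (t • A) := by simpa using isUnit_one_sub_of_norm_lt_one hA
  simpa using (isUnit_smul_iff (Units.mk0 t ht) A).1 htA

lemma normInf_inv_le_of_normInf_one_sub_smul_le {t c : ℝ} (ht : 0 < t) (hc : 0 < c)
    (hA : normInf (1 - t • A) ≤ 1 - c * t) : normInf A⁻¹ ≤ c⁻¹ := by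
  have hunit : IsUnit A := isUnit_of_normInf_one_sub_smul_lt_one ht.ne'
    (hA.trans_lt (sub_lt_self 1 (mul_pos hc ht)))
  have hfixed : A⁻¹ = t • 1 + (1 - t • A) * A⁻¹ := by
    rw [sub_mul, smul_mul_assoc,
      Matrix.mul_nonsing_inv A ((Matrix.isUnit_iff_isUnit_det A).1 hunit)]
    simp
  rw [normInf_eq_norm] at hA ⊢
  have hnorm : ‖A⁻¹‖ ≤ t + (1 - c * t) * ‖A⁻¹‖ := by
    conv_lhs => rw [hfixed]
    refine norm_add_le_of_le ?_ (norm_mul_le_of_le hA le_rfl)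
    rw [norm_smul, norm_one, mul_one, Real.norm_of_nonneg ht.le]
  have hscaled : t * (c * ‖A⁻¹‖) ≤ t * 1 := by linarith
  rw [← one_div c, le_div_iff₀' hc]
  exact le_of_mul_le_mul_left hscaled ht

end MatrixNorm

section DiscountedSum

variable {R : Type*}

/-- The value at time `k` of the linear recursion `x (k + 1) = r k * x k + f k` started at
`x 0 = 0`, in closed form: the input `f i` is discounted by the factors `r j` at all later
times `i < j < k`. -/
def discountedSum [CommSemiring R] (r f : ℕ → R) (k : ℕ) : R :=
  ∑ i ∈ range k, f i * ∏ j ∈ Ico (i + 1) k, r j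

@[simp]
lemma discountedSum_zero [CommSemiring R] (r f : ℕ → R) : discountedSum r f 0 = 0 := by
  simp [discountedSum]

lemma discountedSum_succ [CommSemiring R] (r f : ℕ → R) (k : ℕ) :
    discountedSum r f (k + 1) = r k * discountedSum r f k + f k := by
  have hearlier : ∀ i ∈ range k, f i * ∏ j ∈ Ico (i + 1) (k + 1), r j
      = r k * (f i * ∏ j ∈ Ico (i + 1) k, r j) := fun i hi => by
    rw [prod_Ico_succ_top (mem_range.1 hi)]
    ring
  rw [discountedSum, sum_range_succ, sum_congr rfl hearlier, ← mul_sum]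
  simp [discountedSum]

lemma discountedSum_nonneg [CommSemiring R] [PartialOrder R] [IsOrderedRing R] {r f : ℕ → R}
    {k : ℕ} (hr : ∀ j, 0 ≤ r j) (hf : ∀ i < k, 0 ≤ f i) : 0 ≤ discountedSum r f k :=
  sum_nonneg fun i hi => mul_nonneg (hf i (mem_range.1 hi)) (prod_nonneg fun j _ => hr j)

lemma discountedSum_le_of_supersolution [CommSemiring R] [PartialOrder R] [IsOrderedRing R]
    {r f g : ℕ → R} (hr : ∀ j, 0 ≤ r j) (hg0 : 0 ≤ g 0)
    (hg : ∀ k, r k * g k + f k ≤ g (k + 1)) (k : ℕ) : discountedSum r f k ≤ g k := by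
  induction k with
  | zero => simpa using hg0
  | succ k ih =>
    rw [discountedSum_succ]
    exact (add_le_add_left (mul_le_mul_of_nonneg_left ih (hr k)) _).trans (hg k)

/-- The discounted sum of the gaps `a i - a k` between the values of `a` before time `k` and its
value at time `k`. For `r j = 1 - c * a j` it bounds the contribution of index `k` to the sum over
`i` of the deviations of `Ψ_i^K` from `A⁻¹`. -/
def discountedGap [CommRing R] (r a : ℕ → R) (k : ℕ) : R :=
  discountedSum r (fun i => a i - a k) k

@[simp]
lemma discountedGap_zero [CommRing R] (r a : ℕ → R) : discountedGap r a 0 = 0 :=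
  discountedSum_zero _ _

lemma discountedGap_eq_sub [CommRing R] (r a : ℕ → R) (k : ℕ) :
    discountedGap r a k = discountedSum r a k - a k * discountedSum r 1 k := by
  simp [discountedGap, discountedSum, sub_mul, sum_sub_distrib, mul_sum]

lemma discountedGap_succ [CommRing R] (r a : ℕ → R) (k : ℕ) :
    discountedGap r a (k + 1) =
      r k * discountedGap r a k + (a k - a (k + 1)) * discountedSum r 1 (k + 1) := by
  simp only [discountedGap_eq_sub, discountedSum_succ, Pi.one_apply]
  ring

lemma discountedGap_nonneg [CommRing R] [PartialOrder R] [IsOrderedRing R] {r a : ℕ → R}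
    (hr : ∀ j, 0 ≤ r j) (ha : Antitone a) (k : ℕ) : 0 ≤ discountedGap r a k :=
  discountedSum_nonneg hr fun _ hi => sub_nonneg.2 (ha hi.le)

end DiscountedSum

lemma sum_normInf_Psi_sub_inv_le {n : Type*} [Fintype n] [Nonempty n] [DecidableEq n]
    {A : Matrix n n ℝ} {a r : ℕ → ℝ} (hA : IsUnit A) (ha : Antitone a)
    (hr : ∀ j, normInf (1 - a j • A) ≤ r j) (K : ℕ) :
    ∑ i ∈ range (K + 1), normInf (Psi A a i K - A⁻¹) ≤
      ∑ k ∈ range (K + 1), discountedGap r a k + discountedSum r 1 (K + 1) * normInf A⁻¹ := by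
  calc ∑ i ∈ range (K + 1), normInf (Psi A a i K - A⁻¹)
      ≤ ∑ i ∈ range (K + 1), (∑ k ∈ Ico (i + 1) (K + 1), (a i - a k) * ∏ j ∈ Ico (i + 1) k, r j
          + (∏ j ∈ Ico (i + 1) (K + 1), r j) * normInf A⁻¹) :=
        sum_le_sum fun i hi => normInf_Psi_sub_inv_le hA ha hr (mem_range_succ_iff.1 hi)
    _ = ∑ k ∈ range (K + 1), discountedGap r a k + discountedSum r 1 (K + 1) * normInf A⁻¹ := by
        rw [sum_add_distrib, ← sum_mul]
        congr 1
        · simp only [discountedGap, discountedSum]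
          exact sum_comm' fun i k => by simp only [mem_range, mem_Ico]; omega
        · simp [discountedSum]

section StepSizes

variable {a : ℕ → ℝ} {c : ℝ}

lemma discountedSum_one_le (hapos : ∀ j, 0 < a j) (ha : Antitone a) (hc : 0 < c)
    (hca : ∀ j, 0 ≤ 1 - c * a j) (k : ℕ) :
    discountedSum (fun j => 1 - c * a j) 1 (k + 1) ≤ (a k)⁻¹ / c := by
  have hfixed : ∀ j, (1 - c * a j) * ((a j)⁻¹ / c) + 1 = (a j)⁻¹ / c := fun j => by
    have := (hapos j).ne'
    field_simp
    ring
  have hprev : discountedSum (fun j => 1 - c * a j) 1 k ≤ (a k)⁻¹ / c := by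
    refine discountedSum_le_of_supersolution (g := fun j => (a j)⁻¹ / c) hca
      (div_nonneg (inv_nonneg.2 (hapos 0).le) hc.le) (fun j => ?_) k
    rw [Pi.one_apply, hfixed j]
    have := hapos (j + 1)
    gcongr
    exact ha j.le_succ
  rw [discountedSum_succ, ← hfixed k]
  exact add_le_add_left (mul_le_mul_of_nonneg_left hprev (hca k)) _

lemma discountedGap_le_inv (hapos : ∀ j, 0 < a j) (hc : 0 < c) (hca : ∀ j, 0 ≤ 1 - c * a j)
    (k : ℕ) : discountedGap (fun j => 1 - c * a j) a k ≤ c⁻¹ := by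
  have hsum : discountedSum (fun j => 1 - c * a j) a k ≤ c⁻¹ := by
    refine discountedSum_le_of_supersolution (g := fun _ => c⁻¹) hca (inv_nonneg.2 hc.le)
      (fun j => le_of_eq ?_) k
    rw [sub_mul, mul_right_comm, mul_inv_cancel₀ hc.ne']
    ring
  have hcorrection : 0 ≤ a k * discountedSum (fun j => 1 - c * a j) 1 k :=
    mul_nonneg (hapos k).le (discountedSum_nonneg hca fun _ _ => zero_le_one)
  rw [discountedGap_eq_sub]
  linarith

lemma sub_mul_inv_mul_inv_le {x y : ℝ} (hx : 0 < x) (hy : 0 < y) :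
    (x - y) * x⁻¹ * x⁻¹ ≤ y⁻¹ - x⁻¹ := by
  have hsq : y⁻¹ - x⁻¹ - (x - y) * x⁻¹ * x⁻¹ = y * (y⁻¹ - x⁻¹) ^ 2 := by
    field_simp
  linarith [show 0 ≤ y * (y⁻¹ - x⁻¹) ^ 2 by positivity]

lemma mul_discountedGap_add_le (hapos : ∀ j, 0 < a j) (ha : Antitone a) (hc : 0 < c)
    (hca : ∀ j, 0 ≤ 1 - c * a j) (k : ℕ) :
    c * discountedGap (fun j => 1 - c * a j) a k
        + (a k)⁻¹ * discountedGap (fun j => 1 - c * a j) a (k + 1) ≤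
      (a k)⁻¹ * discountedGap (fun j => 1 - c * a j) a k + ((a (k + 1))⁻¹ - (a k)⁻¹) / c := by
  have hgap : 0 ≤ a k - a (k + 1) := sub_nonneg.2 (ha k.le_succ)
  have hinv : 0 ≤ (a k)⁻¹ := inv_nonneg.2 (hapos k).le
  have hinput : (a k)⁻¹ * ((a k - a (k + 1)) * discountedSum (fun j => 1 - c * a j) 1 (k + 1)) ≤
      ((a (k + 1))⁻¹ - (a k)⁻¹) / c :=
    calc _ ≤ (a k)⁻¹ * ((a k - a (k + 1)) * ((a k)⁻¹ / c)) := by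
          gcongr
          exact discountedSum_one_le hapos ha hc hca k
      _ = (a k - a (k + 1)) * (a k)⁻¹ * (a k)⁻¹ / c := by ring
      _ ≤ ((a (k + 1))⁻¹ - (a k)⁻¹) / c := by
          gcongr
          exact sub_mul_inv_mul_inv_le (hapos k) (hapos (k + 1))
  have hdecay : (a k)⁻¹ * ((1 - c * a k) * discountedGap (fun j => 1 - c * a j) a k)
      = (a k)⁻¹ * discountedGap (fun j => 1 - c * a j) a k
        - c * discountedGap (fun j => 1 - c * a j) a k := by
    have := (hapos k).ne'
    field_simp
  rw [discountedGap_succ, mul_add, hdecay]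
  linarith

lemma mul_discountedGap_add_le_of_inv_sub_le (hapos : ∀ j, 0 < a j) (ha : Antitone a) (hc : 0 < c)
    (hca : ∀ j, 0 ≤ 1 - c * a j) {k : ℕ} {δ ε : ℝ} (hε : 0 ≤ ε)
    (hinv : (a (k + 1))⁻¹ - (a k)⁻¹ ≤ δ + ε) :
    c * discountedGap (fun j => 1 - c * a j) a k
        + (a (k + 1))⁻¹ * discountedGap (fun j => 1 - c * a j) a (k + 1) ≤
      (a k)⁻¹ * discountedGap (fun j => 1 - c * a j) a k
        + δ * discountedGap (fun j => 1 - c * a j) a (k + 1)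
        + (ε + ((a (k + 1))⁻¹ - (a k)⁻¹)) / c := by
  have hgrowth := mul_le_mul_of_nonneg_right hinv (discountedGap_nonneg hca ha (k + 1))
  have hexcess := mul_le_mul_of_nonneg_left (discountedGap_le_inv hapos hc hca (k + 1)) hε
  rw [add_div, div_eq_mul_inv ε]
  linarith [mul_discountedGap_add_le hapos ha hc hca k]

lemma mul_sum_range_succ_le_of_potential {T u w : ℕ → ℝ} {δ : ℝ} (hT0 : T 0 = 0)
    (hT : ∀ k, 0 ≤ T k) (hu : ∀ k, c ≤ u k)
    (hstep : ∀ k, c * T k + u (k + 1) * T (k + 1) ≤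
      u k * T k + δ * T (k + 1) + (w (k + 1) - w k)) (K : ℕ) :
    (c - δ) * ∑ k ∈ range (K + 1), T k ≤ w K - w 0 := by
  have hpotential : c * ∑ k ∈ range K, T k + u K * T K ≤
      δ * ∑ k ∈ range (K + 1), T k + (w K - w 0) := by
    induction K with
    | zero => simp [hT0]
    | succ K ih =>
      rw [sum_range_succ T (K + 1), mul_add, sum_range_succ T K] at *
      linarith [hstep K]
  have hlast : c * T K ≤ u K * T K := mul_le_mul_of_nonneg_right (hu K) (hT K)
  rw [sub_mul]
  rw [sum_range_succ T K] at hpotential ⊢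
  linarith

lemma sum_discountedGap_le (hapos : ∀ j, 0 < a j) (ha : Antitone a) (hc : 0 < c)
    (hca : ∀ j, 0 ≤ 1 - c * a j) {v : ℕ → ℝ} (hv : Monotone v)
    (hav : ∀ k, (a (k + 1))⁻¹ - (a k)⁻¹ ≤ c / 2 + (v (k + 1) - v k)) (K : ℕ) :
    ∑ k ∈ range (K + 1), discountedGap (fun j => 1 - c * a j) a k ≤
      2 * (v K - v 0 + ((a K)⁻¹ - (a 0)⁻¹)) / c ^ 2 := by
  have hcinv : ∀ k, c ≤ (a k)⁻¹ := fun k => by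
    rw [← one_div, le_div_iff₀ (hapos k)]
    exact sub_nonneg.1 (hca k)
  have hhalf := mul_sum_range_succ_le_of_potential (w := fun k => (v k + (a k)⁻¹) / c)
    (discountedGap_zero _ _) (discountedGap_nonneg hca ha) hcinv (fun k => by
      convert mul_discountedGap_add_le_of_inv_sub_le hapos ha hc hca
        (sub_nonneg.2 (hv k.le_succ)) (hav k) using 2
      ring) K
  rw [← sub_div, sub_half, le_div_iff₀ hc] at hhalf
  rw [le_div_iff₀ (by positivity)]
  linarith

end StepSizes

lemma sum_normInf_Psi_sub_inv_le_of_contraction {n : Type*} [Fintype n] [Nonempty n] [DecidableEq n]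
    {A : Matrix n n ℝ} {a : ℕ → ℝ} {c : ℝ} (hapos : ∀ j, 0 < a j) (ha : Antitone a) (hc : 0 < c)
    (hA : ∀ j, normInf (1 - a j • A) ≤ 1 - c * a j) {v : ℕ → ℝ} (hv : Monotone v)
    (hav : ∀ k, (a (k + 1))⁻¹ - (a k)⁻¹ ≤ c / 2 + (v (k + 1) - v k)) (K : ℕ) :
    ∑ i ∈ range (K + 1), normInf (Psi A a i K - A⁻¹) ≤
      (2 * (v K - v 0 + ((a K)⁻¹ - (a 0)⁻¹)) + (a K)⁻¹) / c ^ 2 := by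
  have hca : ∀ j, 0 ≤ 1 - c * a j := fun j => (normInf_nonneg _).trans (hA j)
  have hunit : IsUnit A := isUnit_of_normInf_one_sub_smul_lt_one (hapos 0).ne'
    ((hA 0).trans_lt (sub_lt_self 1 (mul_pos hc (hapos 0))))
  have hinv : normInf A⁻¹ ≤ c⁻¹ := normInf_inv_le_of_normInf_one_sub_smul_le (hapos 0) hc (hA 0)
  calc ∑ i ∈ range (K + 1), normInf (Psi A a i K - A⁻¹)
      ≤ ∑ k ∈ range (K + 1), discountedGap (fun j => 1 - c * a j) a k
          + discountedSum (fun j => 1 - c * a j) 1 (K + 1) * normInf A⁻¹ :=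
        sum_normInf_Psi_sub_inv_le hunit ha hA K
    _ ≤ 2 * (v K - v 0 + ((a K)⁻¹ - (a 0)⁻¹)) / c ^ 2 + (a K)⁻¹ / c * c⁻¹ :=
        add_le_add (sum_discountedGap_le hapos ha hc hca hv hav K)
          (mul_le_mul (discountedSum_one_le hapos ha hc hca K) hinv (normInf_nonneg _)
            (div_nonneg (inv_nonneg.2 (hapos K).le) hc.le))
    _ = (2 * (v K - v 0 + ((a K)⁻¹ - (a 0)⁻¹)) + (a K)⁻¹) / c ^ 2 := by ring

section PolynomialSteps

variable {α b β c : ℝ}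

lemma rpow_sub_rpow_le_mul_rpow_sub_one {x y : ℝ} (hx : 0 < x) (hy : 0 ≤ y) (hβ0 : 0 ≤ β)
    (hβ1 : β ≤ 1) : y ^ β - x ^ β ≤ β * x ^ (β - 1) * (y - x) := by
  have hbernoulli : (1 + (y / x - 1)) ^ β ≤ 1 + β * (y / x - 1) :=
    rpow_one_add_le_one_add_mul_self (by linarith [div_nonneg hy hx.le]) hβ0 hβ1
  rw [add_sub_cancel, Real.div_rpow hy hx.le, div_le_iff₀ (by positivity)] at hbernoulli
  rw [Real.rpow_sub_one hx.ne']
  calc y ^ β - x ^ β ≤ (1 + β * (y / x - 1)) * x ^ β - x ^ β := by linarith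
    _ = β * (x ^ β / x) * (y - x) := by field_simp; ring

lemma rpow_add_one_sub_rpow_le {x t δ : ℝ} (hx : 0 < x) (ht : 0 ≤ t) (hβ0 : 0 ≤ β) (hβ1 : β ≤ 1)
    (hδ : 0 ≤ δ) (htδ : β ≤ δ * t ^ (1 - β)) :
    (x + 1) ^ β - x ^ β ≤ δ + (min ((x + 1) ^ β) (t ^ β) - min (x ^ β) (t ^ β)) := by
  have hzpos : 0 < max x t := lt_max_of_lt_left hx
  have hslope : β * max x t ^ (β - 1) ≤ δ := by
    rw [← neg_sub, Real.rpow_neg hzpos.le, ← div_eq_mul_inv, div_le_iff₀ (by positivity)]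
    refine htδ.trans (mul_le_mul_of_nonneg_left ?_ hδ)
    exact Real.rpow_le_rpow ht (le_max_right _ _) (sub_nonneg.2 hβ1)
  have hstep : max (x + 1) t - max x t ≤ 1 := by
    rw [sub_le_iff_le_add']
    exact max_le (by gcongr; exact le_max_left _ _) (by linarith [le_max_right x t])
  have htail : max (x + 1) t ^ β - max x t ^ β ≤ δ :=
    calc _ ≤ β * max x t ^ (β - 1) * (max (x + 1) t - max x t) :=
          rpow_sub_rpow_le_mul_rpow_sub_one hzpos (by positivity) hβ0 hβ1
      _ ≤ β * max x t ^ (β - 1) * 1 := mul_le_mul_of_nonneg_left hstep (by positivity)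
      _ ≤ δ := by rwa [mul_one]
  have hmax : ∀ y, 0 ≤ y → max y t ^ β = max (y ^ β) (t ^ β) := fun y hy =>
    (Real.monotoneOn_rpow_Ici_of_exponent_nonneg hβ0).map_max hy ht
  rw [hmax _ (by positivity), hmax _ hx.le] at htail
  linarith [min_add_max ((x + 1) ^ β) (t ^ β), min_add_max (x ^ β) (t ^ β)]

/-- The step sizes `α_j = α (j + b)^{-β}`. -/
noncomputable def polyStep (α b β : ℝ) (j : ℕ) : ℝ :=
  α * ((j : ℝ) + b) ^ (-β)

lemma polyStep_pos (hα : 0 < α) (hb : 0 < b) (j : ℕ) : 0 < polyStep α b β j := by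
  unfold polyStep
  positivity

lemma antitone_polyStep (hα : 0 ≤ α) (hb : 0 < b) (hβ : 0 ≤ β) : Antitone (polyStep α b β) :=
  fun i j hij => by
    refine mul_le_mul_of_nonneg_left ?_ hα
    exact Real.rpow_le_rpow_of_nonpos (by positivity) (by gcongr) (neg_nonpos.2 hβ)

lemma inv_polyStep (hb : 0 ≤ b) (j : ℕ) : (polyStep α b β j)⁻¹ = ((j : ℝ) + b) ^ β / α := by
  rw [polyStep, mul_inv, ← Real.rpow_neg (by positivity), neg_neg, div_eq_inv_mul]

lemma exists_monotone_inv_polyStep_sub_le (hα : 0 < α) (hb : 0 < b) (hβ0 : 0 ≤ β) (hβ1 : β < 1)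
    (hc : 0 < c) :
    ∃ v : ℕ → ℝ, Monotone v ∧ 0 ≤ v 0 ∧
      (∀ k, v k ≤ (2 * β / α) ^ (β / (1 - β)) / α * c ^ (-(β / (1 - β)))) ∧
      ∀ k, (polyStep α b β (k + 1))⁻¹ - (polyStep α b β k)⁻¹ ≤ c / 2 + (v (k + 1) - v k) := by
  have hβ1' : 0 < 1 - β := sub_pos.2 hβ1
  set t := (2 * β / (c * α)) ^ (1 / (1 - β)) with ht
  have ht0 : 0 ≤ t := by positivity
  have hslope : β ≤ c * α / 2 * t ^ (1 - β) := by
    rw [ht, ← Real.rpow_mul (by positivity), one_div_mul_cancel hβ1'.ne', Real.rpow_one]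
    exact le_of_eq (by field_simp)
  have htβ : t ^ β = (2 * β / α) ^ (β / (1 - β)) * c ^ (-(β / (1 - β))) := by
    rw [ht, ← Real.rpow_mul (by positivity), one_div_mul_eq_div, Real.rpow_neg hc.le,
      ← Real.inv_rpow hc.le, ← Real.mul_rpow (by positivity) (by positivity)]
    congr 1
    field_simp
  -- Beyond `t` the slope of `x ↦ x ^ β / α` is at most `c / 2`; truncating there absorbs the rest.
  refine ⟨fun k => min (((k : ℝ) + b) ^ β) (t ^ β) / α, fun i j hij => ?_, by positivity,
    fun k => ?_, fun k => ?_⟩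
  · refine div_le_div_of_nonneg_right (min_le_min_right _ ?_) hα.le
    exact Real.rpow_le_rpow (by positivity) (by gcongr) hβ0
  · rw [div_mul_eq_mul_div, ← htβ]
    exact div_le_div_of_nonneg_right (min_le_right _ _) hα.le
  · have hstep := rpow_add_one_sub_rpow_le (x := (k : ℝ) + b) (by positivity) ht0 hβ0 hβ1.le
      (by positivity) hslope
    rw [inv_polyStep hb.le, inv_polyStep hb.le, ← sub_div, ← sub_div,
      div_le_iff₀ hα, add_mul, div_mul_cancel₀ _ hα.ne', Nat.cast_succ, add_right_comm]
    linarith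

lemma natCast_add_rpow_le (hb : 0 ≤ b) (hβ : 0 ≤ β) {K : ℕ} (hK : 1 ≤ K) :
    ((K : ℝ) + b) ^ β ≤ (1 + b) ^ β * (K : ℝ) ^ β := by
  have hK' : (1 : ℝ) ≤ K := Nat.one_le_cast.2 hK
  rw [← Real.mul_rpow (by positivity) (by positivity)]
  gcongr
  linarith [le_mul_of_one_le_right hb hK']

lemma rpow_neg_div_one_sub_div_sq (hc : 0 < c) (hβ : β < 1) :
    c ^ (-(β / (1 - β))) / c ^ 2 = c ^ (-(2 - β) / (1 - β)) := by
  have hβ' : 1 - β ≠ 0 := (sub_pos.2 hβ).ne'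
  rw [← Real.rpow_natCast c 2, ← Real.rpow_sub hc]
  congr 1
  field_simp
  push_cast
  ring

lemma sum_normInf_Psi_polyStep_sub_inv_le {n : Type*} [Fintype n] [Nonempty n] [DecidableEq n]
    {A : Matrix n n ℝ} (hα : 0 < α) (hb : 0 < b) (hβ0 : 0 ≤ β) (hβ1 : β < 1) (hc : 0 < c)
    (hA : ∀ j, normInf (1 - polyStep α b β j • A) ≤ 1 - c * polyStep α b β j)
    {K : ℕ} (hK : 1 ≤ K) :
    ∑ i ∈ range (K + 1), normInf (Psi A (polyStep α b β) i K - A⁻¹) ≤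
      2 * (2 * β / α) ^ (β / (1 - β)) / α * c ^ (-(2 - β) / (1 - β))
        + 3 * (1 + b) ^ β / α * ((K : ℝ) ^ β / c ^ 2) := by
  obtain ⟨v, hv, hv0, hvle, hav⟩ := exists_monotone_inv_polyStep_sub_le hα hb hβ0 hβ1 hc
  have hinv0 : 0 ≤ (polyStep α b β 0)⁻¹ := inv_nonneg.2 (polyStep_pos hα hb 0).le
  have hinvK : (polyStep α b β K)⁻¹ ≤ (1 + b) ^ β * (K : ℝ) ^ β / α := by
    rw [inv_polyStep hb.le]
    exact div_le_div_of_nonneg_right (natCast_add_rpow_le hb.le hβ0 hK) hα.le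
  calc ∑ i ∈ range (K + 1), normInf (Psi A (polyStep α b β) i K - A⁻¹)
      ≤ (2 * (v K - v 0 + ((polyStep α b β K)⁻¹ - (polyStep α b β 0)⁻¹))
          + (polyStep α b β K)⁻¹) / c ^ 2 :=
        sum_normInf_Psi_sub_inv_le_of_contraction (polyStep_pos hα hb)
          (antitone_polyStep hα.le hb hβ0) hc hA hv hav K
    _ ≤ (2 * ((2 * β / α) ^ (β / (1 - β)) / α * c ^ (-(β / (1 - β))))
          + 3 * ((1 + b) ^ β * (K : ℝ) ^ β / α)) / c ^ 2 := by
        refine div_le_div_of_nonneg_right ?_ (sq_nonneg c)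
        linarith [hvle K]
    _ = 2 * (2 * β / α) ^ (β / (1 - β)) / α * (c ^ (-(β / (1 - β))) / c ^ 2)
          + 3 * (1 + b) ^ β / α * ((K : ℝ) ^ β / c ^ 2) := by ring
    _ = _ := by rw [rpow_neg_div_one_sub_div_sq hc hβ1]

end PolynomialSteps

theorem summed_bound_deviation_Psi_from_inverse_general
    (α b β : ℝ) (hα : 0 < α) (hb : 0 < b) (hβ0 : 0 ≤ β) (hβ1 : β < 1) :
    ∃ C : ℝ, 0 < C ∧
      ∀ (n : Type*) [Fintype n] [Nonempty n] [DecidableEq n] (A : Matrix n n ℝ) (c : ℝ), 0 < c →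
        (∀ j : ℕ, normInf (1 - (α * ((j : ℝ) + b) ^ (-β)) • A) ≤
          1 - c * (α * ((j : ℝ) + b) ^ (-β))) →
        ∀ K : ℕ, 1 ≤ K →
          ∑ i ∈ range (K + 1), normInf (Psi A (fun j => α * ((j : ℝ) + b) ^ (-β)) i K - A⁻¹) ≤
            C * (c ^ (-(2 - β) / (1 - β)) + (K : ℝ) ^ β / c ^ 2) := by
  refine ⟨2 * (2 * β / α) ^ (β / (1 - β)) / α + 3 * (1 + b) ^ β / α, by positivity,
    fun n _ _ _ A c hc hA K hK => ?_⟩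
  refine (sum_normInf_Psi_polyStep_sub_inv_le hα hb hβ0 hβ1 hc hA hK).trans ?_
  rw [mul_add]
  gcongr
  · exact le_add_of_nonneg_right (by positivity)
  · exact le_add_of_nonneg_left (by positivity)

/-- Summed bound on the deviation of Ψ_i^K from A⁻¹ (second bound of Lemma 4). -/
theorem summed_bound_deviation_Psi_from_inverse
    (α b β : ℝ) (hα : 0 < α) (hb : 0 < b) (hβ0 : 0 < β) (hβ1 : β < 1) :
    ∃ C : ℝ, 0 < C ∧
      ∀ (n : Type) [Fintype n] [Nonempty n] [DecidableEq n],
        ∀ (A : Matrix n n ℝ) (c : ℝ), IsUnit A → 0 < c → c ≤ 1 →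
          (∀ j : ℕ, normInf ((1 : Matrix n n ℝ)
              - (α * ((j : ℝ) + b) ^ (-β)) • A) ≤ 1 - c * (α * ((j : ℝ) + b) ^ (-β))) →
          normInf A⁻¹ ≤ 1 / c →
          ∀ K : ℕ, 1 ≤ K →
            ∑ i ∈ Finset.Icc 1 K,
                normInf (Psi A (fun j => α * ((j : ℝ) + b) ^ (-β)) i K - A⁻¹) ≤
              C * ((1 + Real.log (K : ℝ)) * c ^ (-(2 - β) / (1 - β))
                + (K : ℝ) ^ β / c ^ 2) := by
  obtain ⟨C, hC, hbound⟩ :=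
    summed_bound_deviation_Psi_from_inverse_general.{0} α b β hα hb hβ0.le hβ1
  refine ⟨C, hC, fun n _ _ _ A c _ hc _ hA _ K hK => ?_⟩
  have hlog : 1 ≤ 1 + Real.log K := le_add_of_nonneg_right (Real.log_natCast_nonneg K)
  have hsubset : Icc 1 K ⊆ range (K + 1) := fun i hi => mem_range_succ_iff.2 (mem_Icc.1 hi).2
  calc _ ≤ _ := sum_le_sum_of_subset_of_nonneg hsubset fun _ _ _ => normInf_nonneg _
    _ ≤ _ := hbound n A c hc hA K hK
    _ ≤ _ := by
        gcongr
        exact le_mul_of_one_le_left (by positivity) hlog
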